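/- Let H be a graph whose first gonality equals the number of its vertices, i.e. gon_1(H) = |V(H)|, and fix a vertex v of H. Let E be an effective divisor on H with E(w) ≤ 1 for every vertex w ≠ v. Then E is v-reduced. -/

import Mathlib

open Finset

variable {V : Type*} [Fintype V] [DecidableEq V]

/-- A finite loopless multigraph on vertex type `V`, given by symmetric edge multiplicities. -/
structure Multigraph (V : Type*) [Fintype V] [DecidableEq V] where
  mult : V → V → ℕ
  symm : ∀ u v, mult u v = mult v u
  loopless : ∀ v, mult v v = 0

namespace Multigraph

def Adj (G : Multigraph V) (u v : V) : Prop := 0 < G.mult u v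

/-- A graph is connected. -/
def Connected (G : Multigraph V) : Prop :=
  Nonempty V ∧ ∀ u v : V, Relation.ReflTransGen G.Adj u v

/-- Valence of a vertex. -/
def valence (G : Multigraph V) (v : V) : ℕ := ∑ u, G.mult v u

/-- The Laplacian applied to an integer-valued function on the vertices. -/
def laplacian (G : Multigraph V) (f : V → ℤ) : V → ℤ :=
  fun w => ∑ u, (G.mult w u : ℤ) * (f w - f u)

/-- Degree of a divisor. -/
def degree (D : V → ℤ) : ℤ := ∑ v, D v

/-- A divisor is effective if all coefficients are nonnegative. -/
def Effective (D : V → ℤ) : Prop := ∀ v, 0 ≤ D v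

/-- Linear equivalence of divisors: they differ by a sequence of chip-firing moves,
equivalently by a Laplacian of an integer function. -/
def LinEquiv (G : Multigraph V) (D D' : V → ℤ) : Prop :=
  ∃ f : V → ℤ, D' = D - G.laplacian f

/-- A divisor is winnable if it is linearly equivalent to an effective divisor. -/
def Winnable (G : Multigraph V) (D : V → ℤ) : Prop :=
  ∃ E : V → ℤ, Effective E ∧ G.LinEquiv D E

/-- The Baker–Norine rank of a divisor: the largest `r` such that `D - E` is winnable for
every effective divisor `E` of degree `r` (the defining set contains all negative integers,
and its supremum is `-1` precisely when `D` itself is not winnable). -/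
noncomputable def rank (G : Multigraph V) (D : V → ℤ) : ℤ :=
  sSup {r : ℤ | ∀ E : V → ℤ, Effective E → degree E = r → G.Winnable (fun w => D w - E w)}

/-- The `k`-th gonality of a graph: the smallest degree of a divisor of rank `k`. -/
noncomputable def gonality (G : Multigraph V) (k : ℤ) : ℤ :=
  sInf {d : ℤ | ∃ D : V → ℤ, G.rank D = k ∧ degree D = d}

/-- A graph is gonality-tight if its second gonality exceeds its first by exactly 1. -/
def GonalityTight (G : Multigraph V) : Prop :=
  G.gonality 2 = G.gonality 1 + 1

/-- A divisor realises the `k`-th gonality if it has rank `k` and degree `gon_k(G)`. -/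
def Realises (G : Multigraph V) (k : ℤ) (D : V → ℤ) : Prop :=
  G.rank D = k ∧ degree D = G.gonality k

/-- A divisor is `v`-reduced: nonnegative away from `v`, and set-firing any nonempty set of
vertices not containing `v` creates a negative coefficient inside the set. -/
def Reduced (G : Multigraph V) (v : V) (D : V → ℤ) : Prop :=
  (∀ w, w ≠ v → 0 ≤ D w) ∧
    ∀ U : Finset V, U.Nonempty → v ∉ U →
      ∃ w ∈ U, D w - ∑ u ∈ Uᶜ, (G.mult w u : ℤ) < 0

/-- The genus (first Betti number) of a graph: `|E| - |V| + 1`. -/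
def genus (G : Multigraph V) : ℤ :=
  ((∑ u, ∑ v, G.mult u v : ℕ) : ℤ) / 2 - Fintype.card V + 1

/-- The canonical divisor of a graph. -/
def canonical (G : Multigraph V) : V → ℤ :=
  fun w => (G.valence w : ℤ) - 2

/-- The subgraph induced on a set `S` of vertices (with all edges among `S`). -/
def induce (G : Multigraph V) (S : Finset V) : Multigraph {x // x ∈ S} where
  mult a b := G.mult a b
  symm a b := G.symm a b
  loopless a := G.loopless a

/-- `G.SeparatedBy u w v` means every path from `w` to `v` passes through `u`. -/
def SeparatedBy (G : Multigraph V) (u w v : V) : Prop :=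
  ¬ Relation.ReflTransGen (fun x y => G.Adj x y ∧ x ≠ u ∧ y ≠ u) w v

end Multigraph

/-- Size of the `i`-th level of a quasi-banana graph: level `0` has a single vertex. -/
def qbSize (q : ℕ → ℕ) (i : ℕ) : ℕ := if i = 0 then 1 else q i

/-- `ℓ` is a quasi-banana labelling of `G` exhibiting `G ≅ QB_m(q_1, …, q_m)`:
`ℓ` is a bijection onto the pairs `(i, j)` with `i ≤ m`, `1 ≤ j ≤ qbSize q i`
(vertex `u_{i,j}` is the vertex labelled `(i,j)`), and the edge multiplicities are:
one edge between distinct vertices of the same level, `(∑_{k=1}^{i} q_k) + 2` edges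
between `u_{i,1}` and each `u_{i+1,j}`, and no other edges. -/
def Multigraph.IsQBLabelling (G : Multigraph V) (m : ℕ) (q : ℕ → ℕ) (ℓ : V → ℕ × ℕ) : Prop :=
  (∀ i, 1 ≤ i → i ≤ m → 0 < q i) ∧
  Function.Injective ℓ ∧
  (∀ v : V, (ℓ v).1 ≤ m ∧ 1 ≤ (ℓ v).2 ∧ (ℓ v).2 ≤ qbSize q (ℓ v).1) ∧
  (∀ i j : ℕ, i ≤ m → 1 ≤ j → j ≤ qbSize q i → ∃ v, ℓ v = (i, j)) ∧
  (∀ v w : V, v ≠ w → G.mult v w =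
    if (ℓ v).1 = (ℓ w).1 then 1
    else if (ℓ v).1 + 1 = (ℓ w).1 ∧ (ℓ v).2 = 1 then (∑ i ∈ Finset.Icc 1 (ℓ v).1, q i) + 2
    else if (ℓ w).1 + 1 = (ℓ v).1 ∧ (ℓ w).2 = 1 then (∑ i ∈ Finset.Icc 1 (ℓ w).1, q i) + 2
    else 0)

/-- A graph is a quasi-banana graph if it is isomorphic to some `QB_m(N)`. -/
def Multigraph.IsQuasiBanana (G : Multigraph V) : Prop :=
  ∃ (m : ℕ) (q : ℕ → ℕ) (ℓ : V → ℕ × ℕ), G.IsQBLabelling m q ℓ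

/-- The graph obtained from `G'` by attaching a complete graph `K_n`: `n` new vertices
pairwise joined by exactly one edge, each joined to `v` by exactly `k+1` edges. -/
def attachComplete (G' : Multigraph V) (v : V) (k n : ℕ) : Multigraph (V ⊕ Fin n) where
  mult x y :=
    match x, y with
    | Sum.inl a, Sum.inl b => G'.mult a b
    | Sum.inl a, Sum.inr _ => if a = v then k + 1 else 0
    | Sum.inr _, Sum.inl b => if b = v then k + 1 else 0
    | Sum.inr i, Sum.inr j => if i = j then 0 else 1
  symm := by
    rintro (a | i) (b | j)
    · exact G'.symm a b
    · rfl
    · rfl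
    · by_cases h : i = j
      · simp [h]
      · simp [h, Ne.symm h]
  loopless := by
    rintro (a | i)
    · exact G'.loopless a
    · simp

namespace Multigraph

lemma degree_laplacian (G : Multigraph V) (f : V → ℤ) : degree (G.laplacian f) = 0 := by
  unfold degree laplacian
  have h : ∑ w, ∑ u, (G.mult w u : ℤ) * (f w - f u)
      = - ∑ w, ∑ u, (G.mult w u : ℤ) * (f w - f u) := by
    conv_lhs => rw [Finset.sum_comm]
    rw [← Finset.sum_neg_distrib]
    refine Finset.sum_congr rfl fun w _ => ?_
    rw [← Finset.sum_neg_distrib]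
    refine Finset.sum_congr rfl fun u _ => ?_
    rw [G.symm u w]
    ring
  linarith

lemma Winnable.degree_nonneg {G : Multigraph V} {D : V → ℤ} (h : G.Winnable D) :
    0 ≤ degree D := by
  obtain ⟨E, hE, f, hf⟩ := h
  have h1 : degree E = degree D - degree (G.laplacian f) := by
    subst hf
    simp [degree, Finset.sum_sub_distrib]
  have h2 : 0 ≤ degree E := Finset.sum_nonneg fun v _ => hE v
  rw [degree_laplacian] at h1
  linarith

lemma Winnable.mono {G : Multigraph V} {D D' : V → ℤ} (h : G.Winnable D)
    (hD : ∀ w, D w ≤ D' w) : G.Winnable D' := by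
  obtain ⟨E, hE, f, hf⟩ := h
  refine ⟨D' - G.laplacian f, fun w => ?_, f, rfl⟩
  have h1 := hE w
  have h2 := hD w
  rw [hf] at h1
  simp only [Pi.sub_apply] at *
  linarith

/-- The divisor has rank at least one. -/
def PosRank (G : Multigraph V) (D : V → ℤ) : Prop :=
  ∀ x, G.Winnable (fun w => D w - (Pi.single x 1 : V → ℤ) w)

lemma degree_single (x : V) (c : ℤ) : degree (Pi.single x c : V → ℤ) = c := by
  simp [degree]

lemma PosRank.degree_nonneg {G : Multigraph V} {D : V → ℤ} (x : V) (h : G.PosRank D) :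
    0 ≤ degree D := by
  have h1 := (h x).degree_nonneg
  have h2 := degree_single x 1
  simp only [degree, Finset.sum_sub_distrib] at *
  linarith

lemma eq_single_of_degree_one {E : V → ℤ} (hE : Effective E) (h : degree E = 1) :
    ∃ x, E = Pi.single x 1 := by
  have hx : ∃ x, 0 < E x := by
    by_contra hc
    push Not at hc
    have : degree E ≤ 0 := Finset.sum_nonpos fun v _ => hc v
    omega
  obtain ⟨x, hx⟩ := hx
  refine ⟨x, ?_⟩
  have h1 : E x + ∑ w ∈ Finset.univ.erase x, E w = 1 := by
    rw [Finset.add_sum_erase _ _ (Finset.mem_univ x)]; exact h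
  have h2 : 0 ≤ ∑ w ∈ Finset.univ.erase x, E w := Finset.sum_nonneg fun v _ => hE v
  have h3 : ∑ w ∈ Finset.univ.erase x, E w = 0 := by omega
  rw [Finset.sum_eq_zero_iff_of_nonneg fun v _ => hE v] at h3
  funext w
  by_cases hw : w = x
  · subst hw; simp; omega
  · simp [hw]; exact h3 w (by simp [hw])

lemma rank_eq_one_of_minimal {G : Multigraph V} {D : V → ℤ} (v : V) (hD : G.PosRank D)
    (hmin : ∀ D', G.PosRank D' → degree D ≤ degree D') : G.rank D = 1 := by
  refine IsGreatest.csSup_eq ⟨?_, ?_⟩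
  · intro E hE hd
    obtain ⟨x, rfl⟩ := eq_single_of_degree_one hE hd
    exact hD x
  · intro r hr
    by_contra hlt
    push Not at hlt
    have hP : G.PosRank (fun w => D w - (Pi.single v 1 : V → ℤ) w) := by
      intro x
      have h1 := hr (fun w => (Pi.single x 1 : V → ℤ) w + (Pi.single v (r - 1) : V → ℤ) w)
        (fun w => by
          simp only [Pi.single_apply]
          split_ifs <;> omega)
        (by
          have h1 := degree_single x 1
          have h2 := degree_single v (r - 1)
          simp only [degree, Finset.sum_add_distrib] at *
          linarith)
      refine h1.mono fun w => ?_
      simp only [Pi.single_apply]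
      split_ifs <;> omega
    have h1 := hmin _ hP
    have h2 := degree_single v 1
    simp only [degree, Finset.sum_sub_distrib] at *
    linarith

lemma degree_nonneg_of_rank {G : Multigraph V} {D : V → ℤ} (v : V) (h : G.rank D = 1) :
    0 ≤ degree D := by
  by_contra hneg
  push Not at hneg
  have : G.rank D ≤ 0 := by
    refine csSup_le ⟨-1, ?_⟩ ?_
    · intro E hE hd
      have : 0 ≤ degree E := Finset.sum_nonneg fun v _ => hE v
      omega
    · intro r hr
      by_contra hr0
      push Not at hr0
      have h1 := (hr (Pi.single v r) (fun w => by
          simp only [Pi.single_apply]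
          split_ifs <;> omega) (degree_single v r)).degree_nonneg
      have h2 := degree_single v r
      simp only [degree, Finset.sum_sub_distrib] at *
      linarith
  omega

lemma gonality_le {G : Multigraph V} {D : V → ℤ} (v : V) (hD : G.PosRank D) :
    G.gonality 1 ≤ degree D := by
  obtain ⟨d, ⟨D0, hD0, rfl⟩, hmin⟩ := Int.exists_least_of_bdd
    (P := fun d => ∃ D' : V → ℤ, G.PosRank D' ∧ degree D' = d)
    ⟨0, by rintro z ⟨D', h, rfl⟩; exact h.degree_nonneg v⟩ ⟨_, D, hD, rfl⟩
  have hr := rank_eq_one_of_minimal v hD0 fun D' h => hmin _ ⟨D', h, rfl⟩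
  refine le_trans (csInf_le ⟨0, ?_⟩ ⟨D0, hr, rfl⟩) (hmin _ ⟨D, hD, rfl⟩)
  rintro z ⟨D', h, rfl⟩
  exact degree_nonneg_of_rank v h

lemma exists_boundary {G : Multigraph V} {U : Finset V} {a b : V}
    (h : Relation.ReflTransGen G.Adj a b) (ha : a ∈ U) (hb : b ∉ U) :
    ∃ u ∈ U, ∃ x, x ∉ U ∧ G.Adj u x := by
  induction h with
  | refl => exact absurd ha hb
  | @tail c d _ hcd ih =>
    by_cases hc : c ∈ U
    · exact ⟨c, hc, d, hb, hcd⟩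
    · exact ih hc

end Multigraph

open Multigraph in
/-- If the first gonality of `H` equals the number of vertices, `v` is a
vertex and `E` is an effective divisor with at most one chip on every vertex other than
`v`, then `E` is `v`-reduced. -/
theorem stmt9 (H : Multigraph V) (hH : H.Connected)
    (hgon : H.gonality 1 = (Fintype.card V : ℤ))
    (v : V) (E : V → ℤ) (hE : Multigraph.Effective E)
    (hE1 : ∀ w, w ≠ v → E w ≤ 1) :
    H.Reduced v E := by
  refine ⟨fun w _ => hE w, fun U hU hv => ?_⟩
  by_contra hcon
  push Not at hcon
  obtain ⟨a, ha⟩ := hU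
  obtain ⟨u, hu, x, hx, hux⟩ := exists_boundary (hH.2 a v) ha hv
  have hout : ∀ w ∈ U, ∑ y ∈ Uᶜ, (H.mult w y : ℤ) ≤ 1 := by
    intro w hw
    have h1 := hcon w hw
    have h2 := hE1 w (by rintro rfl; exact hv hw)
    linarith
  have hP : H.PosRank (fun w => 1 - (Pi.single x 1 : V → ℤ) w) := by
    intro y
    by_cases hy : y = x
    · subst hy
      refine ⟨_, ?_, (fun w => if w ∈ U then 1 else 0), rfl⟩
      intro w
      simp only [Pi.sub_apply, laplacian]
      by_cases hw : w ∈ U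
      · have hwy : w ≠ y := by rintro rfl; exact hx hw
        have h1 : ∑ z, (H.mult w z : ℤ) * ((if w ∈ U then 1 else 0) - (if z ∈ U then 1 else 0))
            = ∑ z ∈ Uᶜ, (H.mult w z : ℤ) := by
          rw [← Finset.sum_subset (Finset.subset_univ Uᶜ)]
          · refine Finset.sum_congr rfl fun z hz => ?_
            simp [hw, Finset.mem_compl.1 hz]
          · intro z _ hz
            have : z ∈ U := by simpa using hz
            simp [hw, this]
        rw [h1]
        have := hout w hw
        simp [hwy]
        linarith
      · have h1 : ∑ z, (H.mult w z : ℤ) * ((if w ∈ U then 1 else 0) - (if z ∈ U then 1 else 0))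
            = - ∑ z ∈ U, (H.mult w z : ℤ) := by
          rw [← Finset.sum_neg_distrib, ← Finset.sum_subset (Finset.subset_univ U)]
          · refine Finset.sum_congr rfl fun z hz => ?_
            simp [hw, hz]
          · intro z _ hz
            simp [hw, hz]
        rw [h1]
        by_cases hwy : w = y
        · subst hwy
          have h2 : (H.mult w u : ℤ) ≤ ∑ z ∈ U, (H.mult w z : ℤ) :=
            Finset.single_le_sum (f := fun z => (H.mult w z : ℤ))
              (fun z _ => Int.natCast_nonneg _) hu
          have h3 : (0 : ℤ) < H.mult w u := by
            rw [H.symm w u]; exact_mod_cast hux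
          simp only [Pi.single_eq_same]
          linarith
        · have h2 : 0 ≤ ∑ z ∈ U, (H.mult w z : ℤ) :=
            Finset.sum_nonneg fun z _ => Int.natCast_nonneg _
          simp only [Pi.single_apply, hwy, if_false]
          linarith
    · refine ⟨_, ?_, 0, rfl⟩
      intro w
      simp only [Pi.sub_apply, laplacian, Pi.single_apply, Pi.zero_apply, sub_self, mul_zero,
        Finset.sum_const_zero]
      split_ifs with h1 h2
      · exact absurd (h2.symm.trans h1) hy
      all_goals norm_num
  have h1 := gonality_le v hP
  have h2 := degree_single x 1
  rw [hgon] at h1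
  simp only [degree, Finset.sum_sub_distrib] at *
  simp at h1
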